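/- Let p, q be real numbers with q ≠ 0 and p/q ≥ 1, and let x, y ∈ X be nonzero with ‖x‖ ≠ ‖y‖. Then α_p[x,y] ≤ (p/q) · α_q[x,y] · ∫₀¹ ‖ (1−t)·‖x‖^(q−1) • x + t·‖y‖^(q−1) • y ‖^(p/q − 1) dt ≤ ((‖y‖^p − ‖x‖^p)/(‖y‖^q − ‖x‖^q)) · α_q[x,y]. -/

import Mathlib

/-- The `p`-angular distance `α_p[x,y] = ‖‖x‖^(p-1) • x - ‖y‖^(p-1) • y‖`. -/
noncomputable def alphaD {X : Type*} [NormedAddCommGroup X] [NormedSpace ℝ X]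
    (p : ℝ) (x y : X) : ℝ :=
  ‖(‖x‖ ^ (p - 1)) • x - (‖y‖ ^ (p - 1)) • y‖

/-!
Let `N_p x = ‖x‖ ^ (p - 1) • x`, `u = N_q x`, `v = N_q y` and `r = p / q`. Since `N_r ∘ N_q = N_p`,
the number `α_p[x,y]` is the distance between the endpoints of the curve `N_r` traces over the
segment from `u` to `v`. Young's inequality bounds the speed of that curve by
`r * ‖u - v‖ * ‖(1 - t) • u + t • v‖ ^ (r - 1)`, whose integral is the middle term. Replacing the
norm on the segment by its convex bound `(1 - t) * ‖u‖ + t * ‖v‖` makes the integral explicit and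
gives the right-hand side.
-/

open Set Filter Topology

theorem mul_rpow_sub_one_mul_le {r a b : ℝ} (hr : 1 ≤ r) (ha : 0 ≤ a) (hb : 0 ≤ b) :
    r * (a ^ (r - 1) * b) ≤ (r - 1) * a ^ r + b ^ r := by
  have hr₀ : 0 < r := by linarith
  have young : (a ^ r) ^ ((r - 1) / r) * (b ^ r) ^ (1 / r) ≤
      (r - 1) / r * a ^ r + 1 / r * b ^ r :=
    Real.geom_mean_le_arith_mean2_weighted (div_nonneg (by linarith) hr₀.le) (by positivity)
      (by positivity) (by positivity) (by field_simp; ring)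
  rw [← Real.rpow_mul ha, ← Real.rpow_mul hb, mul_div_cancel₀ _ hr₀.ne',
    mul_div_cancel₀ _ hr₀.ne', Real.rpow_one] at young
  calc r * (a ^ (r - 1) * b)
      ≤ r * ((r - 1) / r * a ^ r + 1 / r * b ^ r) := by gcongr
    _ = (r - 1) * a ^ r + b ^ r := by field_simp

theorem norm_sub_le_integral_of_liminf_slope_right_le {E : Type*} [SeminormedAddCommGroup E]
    {f : ℝ → E} {g : ℝ → ℝ} {a b : ℝ} (hab : a ≤ b) (hf : ContinuousOn f (Icc a b))
    (hg : ContinuousOn g (Icc a b))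
    (hfg : ∀ t ∈ Ico a b, ∀ c, g t < c → ∃ᶠ s in 𝓝[>] t, ‖f s - f t‖ < c * (s - t)) :
    ‖f b - f a‖ ≤ ∫ t in a..b, g t := by
  have hg_int : IntervalIntegrable g MeasureTheory.volume a b :=
    hg.intervalIntegrable_of_Icc hab
  have hasDeriv_integral (t : ℝ) (ht : t ∈ Ico a b) :
      HasDerivWithinAt (fun s ↦ ∫ τ in a..s, g τ) (g t) (Ici t) t := by
    have hIcc : Icc a b ∈ 𝓝[>] t := Icc_mem_nhdsGT_of_mem ht
    refine intervalIntegral.integral_hasDerivWithinAt_right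
      (hg_int.mono_set (uIcc_subset_uIcc_left (Icc_subset_uIcc ⟨ht.1, ht.2.le⟩))) ?_ ?_ (t := Ioi t)
    · exact ⟨Icc a b, hIcc, hg.aestronglyMeasurable measurableSet_Icc⟩
    · exact (hg t ⟨ht.1, ht.2.le⟩).mono_of_mem_nhdsWithin hIcc
  refine image_le_of_liminf_slope_right_le_deriv_boundary (f := fun t ↦ ‖f t - f a‖)
    (hf.sub continuousOn_const).norm (by simp) ?_ hasDeriv_integral ?_ (right_mem_Icc.2 hab)
  · simpa only [uIcc_of_le hab] using
      intervalIntegral.continuousOn_primitive_interval' hg_int left_mem_uIcc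
  · intro t ht c hc
    refine ((hfg t ht c hc).and_eventually self_mem_nhdsWithin).mono fun s ⟨hs, hts⟩ ↦ ?_
    rw [slope_def_field, div_lt_iff₀ (sub_pos.2 hts)]
    calc ‖f s - f a‖ - ‖f t - f a‖ ≤ ‖(f s - f a) - (f t - f a)‖ := norm_sub_norm_le _ _
      _ = ‖f s - f t‖ := by rw [sub_sub_sub_cancel_right]
      _ < c * (s - t) := hs

theorem mul_integral_rpow_sub_one_segment {r a b : ℝ} (hr : 0 < r) (hab : a ≠ b) :
    r * ∫ t in (0 : ℝ)..1, ((1 - t) * a + t * b) ^ (r - 1) = (b ^ r - a ^ r) / (b - a) := by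
  have hba : b - a ≠ 0 := sub_ne_zero.2 hab.symm
  calc r * ∫ t in (0 : ℝ)..1, ((1 - t) * a + t * b) ^ (r - 1)
      = r * ∫ t in (0 : ℝ)..1, (a + (b - a) * t) ^ (r - 1) := by
        congr! 4; ring
    _ = r * ((b - a)⁻¹ * ∫ s in a..b, s ^ (r - 1)) := by
        rw [intervalIntegral.integral_comp_add_mul (fun s ↦ s ^ (r - 1)) hba, smul_eq_mul]
        simp only [mul_zero, add_zero, mul_one, add_sub_cancel]
    _ = (b ^ r - a ^ r) / (b - a) := by
        rw [integral_rpow (Or.inl (by linarith)), sub_add_cancel]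
        field_simp

section NormedSpace

variable {X : Type*} [NormedAddCommGroup X] [NormedSpace ℝ X]

/-- The radial power map `x ↦ ‖x‖ ^ (p - 1) • x`, which raises the norm to the power `p` and keeps
the direction; `alphaD p x y` is the distance between the images of `x` and `y`. It sends `0` to `0`
whatever the value of `0 ^ (p - 1)`. -/
noncomputable def radialPow (p : ℝ) (x : X) : X := ‖x‖ ^ (p - 1) • x

theorem norm_radialPow (p : ℝ) {x : X} (hx : x ≠ 0) : ‖radialPow p x‖ = ‖x‖ ^ p := by
  rw [radialPow, norm_smul, Real.norm_of_nonneg (by positivity),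
    Real.rpow_sub_one (norm_ne_zero_iff.2 hx), div_mul_cancel₀ _ (norm_ne_zero_iff.2 hx)]

theorem radialPow_div_radialPow (p : ℝ) {q : ℝ} (hq : q ≠ 0) (x : X) :
    radialPow (p / q) (radialPow q x) = radialPow p x := by
  rcases eq_or_ne x 0 with rfl | hx
  · simp only [radialPow, smul_zero]
  · have exponent_eq : q * (p / q - 1) + (q - 1) = p - 1 := by field_simp; ring
    rw [radialPow, norm_radialPow q hx, radialPow, radialPow, smul_smul,
      ← Real.rpow_mul (norm_nonneg x), ← Real.rpow_add (norm_pos_iff.2 hx), exponent_eq]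

theorem norm_radialPow_sub_radialPow_le {r : ℝ} (hr : 1 ≤ r) (z w : X) :
    ‖radialPow r z - radialPow r w‖ ≤ r * max ‖z‖ ‖w‖ ^ (r - 1) * ‖z - w‖ := by
  wlog hwz : ‖w‖ ≤ ‖z‖ generalizing z w
  · simpa only [norm_sub_rev, max_comm] using this w z (le_of_not_ge hwz)
  have rpow_eq {c : ℝ} (hc : 0 ≤ c) : c ^ r = c ^ (r - 1) * c := by
    simpa only [sub_add_cancel] using Real.rpow_add_one' hc (y := r - 1) (by linarith)
  have hpow : ‖w‖ ^ (r - 1) ≤ ‖z‖ ^ (r - 1) := by gcongr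
  have radial_part : (‖z‖ ^ (r - 1) - ‖w‖ ^ (r - 1)) * ‖w‖ ≤
      (r - 1) * ‖z‖ ^ (r - 1) * (‖z‖ - ‖w‖) := by
    have young := mul_rpow_sub_one_mul_le hr (norm_nonneg z) (norm_nonneg w)
    rw [rpow_eq (norm_nonneg z), rpow_eq (norm_nonneg w)] at young
    linarith
  rw [max_eq_left hwz]
  calc ‖radialPow r z - radialPow r w‖
      = ‖‖z‖ ^ (r - 1) • (z - w) + (‖z‖ ^ (r - 1) - ‖w‖ ^ (r - 1)) • w‖ := by
        simp only [radialPow]; congr 1; module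
    _ ≤ ‖z‖ ^ (r - 1) * ‖z - w‖ + (‖z‖ ^ (r - 1) - ‖w‖ ^ (r - 1)) * ‖w‖ := by
        refine (norm_add_le _ _).trans_eq ?_
        rw [norm_smul, norm_smul, Real.norm_of_nonneg (by positivity),
          Real.norm_of_nonneg (sub_nonneg.2 hpow)]
    _ ≤ ‖z‖ ^ (r - 1) * ‖z - w‖ + (r - 1) * ‖z‖ ^ (r - 1) * (‖z‖ - ‖w‖) := by gcongr
    _ ≤ ‖z‖ ^ (r - 1) * ‖z - w‖ + (r - 1) * ‖z‖ ^ (r - 1) * ‖z - w‖ := by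
        have : 0 ≤ r - 1 := by linarith
        gcongr
        exact norm_sub_norm_le z w
    _ = r * ‖z‖ ^ (r - 1) * ‖z - w‖ := by ring

theorem norm_radialPow_sub_radialPow_le_integral {r : ℝ} (hr : 1 ≤ r) (u v : X) :
    ‖radialPow r u - radialPow r v‖ ≤
      r * ‖u - v‖ * ∫ t in (0 : ℝ)..1, ‖(1 - t) • u + t • v‖ ^ (r - 1) := by
  have hr₁ : 0 ≤ r - 1 := by linarith
  set γ : ℝ → X := fun t ↦ (1 - t) • u + t • v with γ_def
  have hγ : Continuous γ := by fun_prop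
  have hγ_pow : Continuous fun t ↦ ‖γ t‖ ^ (r - 1) := hγ.norm.rpow_const fun _ ↦ Or.inr hr₁
  have norm_γ_sub {s t : ℝ} (hts : t < s) : ‖γ s - γ t‖ = (s - t) * ‖u - v‖ := by
    rw [show γ s - γ t = (s - t) • (v - u) by simp only [γ_def]; module, norm_smul,
      Real.norm_of_nonneg (sub_nonneg.2 hts.le), norm_sub_rev]
  have bound := norm_sub_le_integral_of_liminf_slope_right_le
    (f := fun t ↦ radialPow r (γ t)) (g := fun t ↦ r * ‖u - v‖ * ‖γ t‖ ^ (r - 1)) zero_le_one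
    (hγ_pow.smul hγ).continuousOn (hγ_pow.const_mul _).continuousOn fun t _ c hc ↦ by
      have hmax : Continuous fun s ↦ r * ‖u - v‖ * max ‖γ s‖ ‖γ t‖ ^ (r - 1) :=
        ((hγ.norm.max continuous_const).rpow_const fun _ ↦ Or.inr hr₁).const_mul _
      have hlt : ∀ᶠ s in 𝓝[>] t, r * ‖u - v‖ * max ‖γ s‖ ‖γ t‖ ^ (r - 1) < c :=
        (hmax.continuousAt.eventually_lt continuousAt_const
          (by simpa only [max_self] using hc)).filter_mono nhdsWithin_le_nhds
      refine (hlt.and self_mem_nhdsWithin).frequently.mono fun s ⟨hs, hts⟩ ↦ ?_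
      calc ‖radialPow r (γ s) - radialPow r (γ t)‖
          ≤ r * max ‖γ s‖ ‖γ t‖ ^ (r - 1) * ‖γ s - γ t‖ := norm_radialPow_sub_radialPow_le hr _ _
        _ = r * ‖u - v‖ * max ‖γ s‖ ‖γ t‖ ^ (r - 1) * (s - t) := by rw [norm_γ_sub hts]; ring
        _ < c * (s - t) := mul_lt_mul_of_pos_right hs (sub_pos.2 hts)
  rw [intervalIntegral.integral_const_mul, norm_sub_rev] at bound
  simpa [γ_def] using bound

theorem mul_integral_norm_rpow_segment_le {r : ℝ} (hr : 1 ≤ r) {u v : X} (huv : ‖u‖ ≠ ‖v‖) :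
    r * ∫ t in (0 : ℝ)..1, ‖(1 - t) • u + t • v‖ ^ (r - 1) ≤
      (‖v‖ ^ r - ‖u‖ ^ r) / (‖v‖ - ‖u‖) := by
  have hr₁ : 0 ≤ r - 1 := by linarith
  rw [← mul_integral_rpow_sub_one_segment (by linarith) huv]
  gcongr
  refine intervalIntegral.integral_mono_on zero_le_one ?_ ?_ fun t ht ↦ ?_
  · exact (Continuous.rpow_const (by fun_prop) fun _ ↦ Or.inr hr₁).intervalIntegrable _ _
  · exact (Continuous.rpow_const (by fun_prop) fun _ ↦ Or.inr hr₁).intervalIntegrable _ _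
  · gcongr
    refine (norm_add_le _ _).trans_eq ?_
    rw [norm_smul, norm_smul, Real.norm_of_nonneg (sub_nonneg.2 ht.2), Real.norm_of_nonneg ht.1]

end NormedSpace

theorem stmt_16 {X : Type*} [NormedAddCommGroup X] [NormedSpace ℝ X]
    (p q : ℝ) (hq : q ≠ 0) (hpq : 1 ≤ p / q)
    (x y : X) (hx : x ≠ 0) (hy : y ≠ 0) (hxy : ‖x‖ ≠ ‖y‖) :
    alphaD p x y ≤ (p / q) * alphaD q x y *
      ∫ t in (0 : ℝ)..1,
        ‖(1 - t) • ((‖x‖ ^ (q - 1)) • x) + t • ((‖y‖ ^ (q - 1)) • y)‖ ^ (p / q - 1) ∧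
    (p / q) * alphaD q x y *
      (∫ t in (0 : ℝ)..1,
        ‖(1 - t) • ((‖x‖ ^ (q - 1)) • x) + t • ((‖y‖ ^ (q - 1)) • y)‖ ^ (p / q - 1)) ≤
      ((‖y‖ ^ p - ‖x‖ ^ p) / (‖y‖ ^ q - ‖x‖ ^ q)) * alphaD q x y := by
  constructor
  · have first := norm_radialPow_sub_radialPow_le_integral hpq (radialPow q x) (radialPow q y)
    rwa [radialPow_div_radialPow p hq, radialPow_div_radialPow p hq] at first
  · have norm_ne : ‖radialPow q x‖ ≠ ‖radialPow q y‖ := by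
      rw [norm_radialPow q hx, norm_radialPow q hy]
      exact (Real.rpow_left_inj (norm_nonneg x) (norm_nonneg y) hq).not.2 hxy
    have rpow_div (z : X) : (‖z‖ ^ q) ^ (p / q) = ‖z‖ ^ p := by
      rw [← Real.rpow_mul (norm_nonneg z), mul_div_cancel₀ _ hq]
    have second := mul_integral_norm_rpow_segment_le hpq norm_ne
    rw [norm_radialPow q hx, norm_radialPow q hy, rpow_div, rpow_div] at second
    rw [mul_right_comm]
    exact mul_le_mul_of_nonneg_right second (norm_nonneg _)
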